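/- arXiv:1902.02152 — 3 statements merged into one kernel-verified Lean document; each statement's English description precedes it below -/
import Mathlib

section
/- For every natural number M there exists a constant c'(M) ∈ ℕ with the following property: for every function ρ : ℕ → ℕ with ρ(l) ≥ c'(M) for all l, the probability that G_R contains a subgroup H with index [G_R : H] ≤ M admitting a surjective homomorphism H ↠ ℤ, for R chosen uniformly in S_l^{ρ(l)}, tends to 0 as l → ∞. -/
open Filter

/-- The type of reduced words of length `l` in the alphabet `X ∪ X⁻¹`, where
`X = {x_1, …, x_n}`; a word is a list of letters `(i, b)`, the letter being `x_i` if
`b = true` and `x_i⁻¹` if `b = false`, and it is reduced if it equals its free reduction. -/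
def ReducedWord (n l : ℕ) : Type :=
  {w : List (Fin n × Bool) // FreeGroup.reduce w = w ∧ w.length = l}

/-- The probability, for a tuple `R` of `k` relators chosen uniformly and independently among
the reduced words of length `l`, that the predicate `P` holds of the corresponding tuple of
elements of the free group on `n` generators. -/
noncomputable def wordProb (n l k : ℕ) (P : (Fin k → FreeGroup (Fin n)) → Prop) : ℝ :=
  (Nat.card {R : Fin k → ReducedWord n l // P fun i => FreeGroup.mk (R i).1} : ℝ) /
    (Nat.card (ReducedWord n l) : ℝ) ^ k

section NonbacktrackingWalk

/-- The inverse of a letter of the alphabet `X ∪ X⁻¹`. -/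
def invLetter {n : ℕ} (a : Fin n × Bool) : Fin n × Bool := (a.1, !a.2)

lemma invLetter_involutive {n : ℕ} : Function.Involutive (invLetter (n := n)) := fun a => by
  simp [invLetter]

/-- The letters that may follow the letter `a` in a reduced word. -/
def nextLetters {n : ℕ} (a : Fin n × Bool) : Finset (Fin n × Bool) :=
  Finset.univ.erase (invLetter a)

lemma mem_nextLetters {n : ℕ} {a b : Fin n × Bool} :
    b ∈ nextLetters a ↔ (a.1 = b.1 → a.2 = b.2) := by
  obtain ⟨i, s⟩ := a
  obtain ⟨j, t⟩ := b
  cases s <;> cases t <;> simp [nextLetters, invLetter, eq_comm]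

lemma card_nextLetters {n : ℕ} (a : Fin n × Bool) : (nextLetters a).card = 2 * n - 1 := by
  rw [nextLetters, Finset.card_erase_of_mem (Finset.mem_univ _), Finset.card_univ,
    Fintype.card_prod, Fintype.card_fin, Fintype.card_bool, mul_comm]

lemma sum_sum_nextLetters {n : ℕ} (f : Fin n × Bool → ℝ) :
    ∑ a, ∑ b ∈ nextLetters a, f b = (2 * n - 1 : ℝ) * ∑ b, f b := by
  have h (a : Fin n × Bool) : ∑ b ∈ nextLetters a, f b = ∑ b, f b - f (invLetter a) := by
    rw [nextLetters, Finset.sum_erase_eq_sub (Finset.mem_univ _)]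
  have h' : ∑ a : Fin n × Bool, f (invLetter a) = ∑ a, f a :=
      Equiv.sum_comp invLetter_involutive.toPerm f
  simp only [h, Finset.sum_sub_distrib, h', Finset.sum_const, Finset.card_univ,
    Fintype.card_prod, Fintype.card_fin, Fintype.card_bool, nsmul_eq_mul]
  push_cast
  ring

lemma exists_mem_nextLetters {n : ℕ} (hn : 2 ≤ n) (b b' : Fin n × Bool) :
    ∃ a, b ∈ nextLetters a ∧ b' ∈ nextLetters a := by
  have hcard : ({invLetter b, invLetter b'} : Finset (Fin n × Bool)).card <
      (Finset.univ : Finset (Fin n × Bool)).card := by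
    refine Finset.card_le_two.trans_lt ?_
    simp only [Finset.card_univ, Fintype.card_prod, Fintype.card_fin, Fintype.card_bool]
    omega
  obtain ⟨a, -, ha⟩ := Finset.exists_mem_notMem_of_card_lt_card hcard
  simp only [Finset.mem_insert, Finset.mem_singleton, not_or] at ha
  refine ⟨a, ?_, ?_⟩ <;> simp only [nextLetters, Finset.mem_erase, Finset.mem_univ, and_true]
  · exact fun h => ha.1 (by rw [h, invLetter_involutive])
  · exact fun h => ha.2 (by rw [h, invLetter_involutive])

lemma half_sq_sub_le_card_mul_sum_sq_sub {ι : Type*} (s : Finset ι) (x : ι → ℝ) {i j : ι}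
    (hi : i ∈ s) (hj : j ∈ s) :
    (x i - x j) ^ 2 / 2 ≤ s.card * ∑ k ∈ s, x k ^ 2 - (∑ k ∈ s, x k) ^ 2 := by
  have key : ∑ k ∈ s, ∑ m ∈ s, (x k - x m) ^ 2 =
      2 * (s.card * ∑ k ∈ s, x k ^ 2 - (∑ k ∈ s, x k) ^ 2) := by
    simp only [sub_sq, Finset.sum_add_distrib, Finset.sum_sub_distrib, Finset.sum_const,
      nsmul_eq_mul, ← Finset.mul_sum, ← Finset.sum_mul]
    ring
  have h₁ : (x i - x j) ^ 2 ≤ ∑ m ∈ s, (x i - x m) ^ 2 :=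
    Finset.single_le_sum (f := fun m => (x i - x m) ^ 2) (fun _ _ => sq_nonneg _) hj
  have h₂ : ∑ m ∈ s, (x i - x m) ^ 2 ≤ ∑ k ∈ s, ∑ m ∈ s, (x k - x m) ^ 2 :=
    Finset.single_le_sum (f := fun k => ∑ m ∈ s, (x k - x m) ^ 2)
      (fun _ _ => Finset.sum_nonneg fun _ _ => sq_nonneg _) hi
  linarith

variable {n : ℕ} {V : Type*} [MulAction (FreeGroup (Fin n)) V]

open Classical in
/-- `walkWeight v₀ l a v` is `2 * n` times the probability that a uniformly random reduced word of
length `l + 1` starts with the letter `a` and moves the point `v₀` to `v`. -/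
noncomputable def walkWeight (v₀ : V) : ℕ → Fin n × Bool → V → ℝ
  | 0, a, v => if FreeGroup.mk [a] • v₀ = v then 1 else 0
  | l + 1, a, v =>
    (∑ b ∈ nextLetters a, walkWeight v₀ l b ((FreeGroup.mk [a])⁻¹ • v)) / (2 * n - 1)

lemma walkWeight_nonneg (hn : 2 ≤ n) (v₀ : V) (l : ℕ) (a : Fin n × Bool) (v : V) :
    0 ≤ walkWeight v₀ l a v := by
  have hq : (0 : ℝ) ≤ 2 * n - 1 := by
    have : (2 : ℝ) ≤ n := by exact_mod_cast hn
    linarith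
  induction l generalizing a v with
  | zero => rw [walkWeight]; split_ifs <;> norm_num
  | succ l ih => rw [walkWeight]; exact div_nonneg (Finset.sum_nonneg fun _ _ => ih _ _) hq

lemma walkWeight_succ_smul (v₀ : V) (l : ℕ) (a : Fin n × Bool) (v : V) :
    walkWeight v₀ (l + 1) a (FreeGroup.mk [a] • v) =
      (∑ b ∈ nextLetters a, walkWeight v₀ l b v) / (2 * n - 1) := by
  rw [walkWeight, inv_smul_smul]

lemma sum_walkWeight [Fintype V] (hn : 2 ≤ n) (v₀ : V) (l : ℕ) :
    ∑ a : Fin n × Bool, ∑ v, walkWeight v₀ l a v = 2 * n := by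
  have hq : (2 * n - 1 : ℝ) ≠ 0 := by
    have : (2 : ℝ) ≤ n := by exact_mod_cast hn
    linarith
  induction l with
  | zero =>
    classical
    simp only [walkWeight, Finset.sum_ite_eq, Finset.mem_univ, if_true, Finset.sum_const,
      Finset.card_univ, Fintype.card_prod, Fintype.card_fin, Fintype.card_bool, nsmul_eq_mul]
    push_cast
    ring
  | succ l ih =>
    have h (a : Fin n × Bool) : ∑ v, walkWeight v₀ (l + 1) a v =
        ∑ v, (∑ b ∈ nextLetters a, walkWeight v₀ l b v) / (2 * n - 1) := by
      rw [← Equiv.sum_comp (MulAction.toPerm (FreeGroup.mk [a]))]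
      simp only [MulAction.toPerm_apply, walkWeight_succ_smul]
    simp only [h, ← Finset.sum_div]
    rw [Finset.sum_comm]
    simp only [sum_sum_nextLetters]
    rw [← Finset.mul_sum, Finset.sum_comm, ih, mul_div_cancel_left₀ _ hq]

/-- The squared `ℓ²`-norm of the weights of the nonbacktracking walk. -/
noncomputable def walkEnergy (n : ℕ) {V : Type*} [MulAction (FreeGroup (Fin n)) V] [Fintype V]
    (v₀ : V) (l : ℕ) : ℝ :=
  ∑ a : Fin n × Bool, ∑ v, walkWeight v₀ l a v ^ 2

lemma sq_sub_le_walkEnergy_sub [Fintype V] (hn : 2 ≤ n) (v₀ : V) (l : ℕ)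
    (b b' : Fin n × Bool) (v : V) :
    (walkWeight v₀ l b v - walkWeight v₀ l b' v) ^ 2 ≤
      2 * (2 * n - 1) ^ 2 * (walkEnergy n v₀ l - walkEnergy n v₀ (l + 1)) := by
  have hn' : (2 : ℝ) ≤ n := by exact_mod_cast hn
  have hq : (2 * n - 1 : ℝ) ≠ 0 := by linarith
  have hcard (a : Fin n × Bool) : ((nextLetters a).card : ℝ) = 2 * n - 1 := by
    rw [card_nextLetters, Nat.cast_sub (by omega)]
    push_cast
    ring
  let D (a : Fin n × Bool) (v : V) : ℝ :=
    (nextLetters a).card * ∑ b ∈ nextLetters a, walkWeight v₀ l b v ^ 2 -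
      (∑ b ∈ nextLetters a, walkWeight v₀ l b v) ^ 2
  have hD (a : Fin n × Bool) (v : V) : 0 ≤ D a v :=
    sub_nonneg.2 sq_sum_le_card_mul_sum_sq
  have hsum : ∑ a : Fin n × Bool, ∑ v, D a v =
      (2 * n - 1) ^ 2 * (walkEnergy n v₀ l - walkEnergy n v₀ (l + 1)) := by
    have h₁ : ∑ a : Fin n × Bool, ∑ v, ((nextLetters a).card : ℝ) *
        ∑ b ∈ nextLetters a, walkWeight v₀ l b v ^ 2 = (2 * n - 1) ^ 2 * walkEnergy n v₀ l := by
      simp only [hcard, ← Finset.mul_sum]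
      rw [Finset.sum_comm]
      simp only [sum_sum_nextLetters fun b : Fin n × Bool => walkWeight v₀ l b _ ^ 2]
      rw [← Finset.mul_sum, Finset.sum_comm, walkEnergy]
      ring
    have h₂ : ∑ a : Fin n × Bool, ∑ v, (∑ b ∈ nextLetters a, walkWeight v₀ l b v) ^ 2 =
        (2 * n - 1) ^ 2 * walkEnergy n v₀ (l + 1) := by
      rw [walkEnergy, Finset.mul_sum]
      refine Finset.sum_congr rfl fun a _ => ?_
      rw [← Equiv.sum_comp (MulAction.toPerm (FreeGroup.mk [a]))
        (fun v => walkWeight v₀ (l + 1) a v ^ 2), Finset.mul_sum]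
      refine Finset.sum_congr rfl fun v _ => ?_
      rw [MulAction.toPerm_apply, walkWeight_succ_smul]
      field_simp
    simp only [D, Finset.sum_sub_distrib]
    rw [h₁, h₂]
    ring
  obtain ⟨a, ha, ha'⟩ := exists_mem_nextLetters hn b b'
  have h₃ := half_sq_sub_le_card_mul_sum_sq_sub (nextLetters a)
    (fun b => walkWeight v₀ l b v) ha ha'
  have h₄ : D a v ≤ ∑ v, D a v := Finset.single_le_sum (fun v _ => hD a v) (Finset.mem_univ v)
  have h₅ : ∑ v, D a v ≤ ∑ a : Fin n × Bool, ∑ v, D a v :=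
    Finset.single_le_sum (f := fun a => ∑ v, D a v)
      (fun a _ => Finset.sum_nonneg fun v _ => hD a v) (Finset.mem_univ a)
  simp only [D] at h₃ h₄ h₅ hsum
  linarith

lemma tendsto_walkWeight_sub_letter [Fintype V] (hn : 2 ≤ n) (v₀ : V)
    (b b' : Fin n × Bool) (v : V) :
    Tendsto (fun l => walkWeight v₀ l b v - walkWeight v₀ l b' v) atTop (nhds 0) := by
  have hn' : (2 : ℝ) ≤ n := by exact_mod_cast hn
  have hq : (0 : ℝ) < 2 * (2 * n - 1) ^ 2 := by
    have : (0 : ℝ) < 2 * n - 1 := by linarith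
    positivity
  have hanti : Antitone (walkEnergy n v₀) := antitone_nat_of_succ_le fun l => by
    have := (sq_nonneg _).trans (sq_sub_le_walkEnergy_sub hn v₀ l b b' v)
    exact sub_nonneg.1 (nonneg_of_mul_nonneg_right this hq)
  have hbdd : BddBelow (Set.range (walkEnergy n v₀)) :=
    ⟨0, by
      rintro _ ⟨l, rfl⟩
      exact Finset.sum_nonneg fun _ _ => Finset.sum_nonneg fun _ _ => sq_nonneg _⟩
  have hlim := tendsto_atTop_ciInf hanti hbdd
  have hdiff := (hlim.sub (hlim.comp (tendsto_add_atTop_nat 1))).const_mul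
    (2 * (2 * n - 1) ^ 2 : ℝ)
  rw [sub_self, mul_zero] at hdiff
  have hsq := squeeze_zero (fun l => sq_nonneg _)
    (fun l => sq_sub_le_walkEnergy_sub hn v₀ l b b' v) hdiff
  have := hsq.sqrt
  simp only [Real.sqrt_sq_eq_abs, Real.sqrt_zero] at this
  exact (tendsto_zero_iff_abs_tendsto_zero _).2 this

lemma tendsto_walkWeight_mk_smul_sub [Fintype V] (hn : 2 ≤ n) (v₀ : V)
    (w : List (Fin n × Bool)) (a b : Fin n × Bool) (v : V) :
    Tendsto (fun l => walkWeight v₀ (l + w.length) a (FreeGroup.mk w • v) - walkWeight v₀ l b v)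
      atTop (nhds 0) := by
  have hn' : (2 : ℝ) ≤ n := by exact_mod_cast hn
  have hq : (2 * n - 1 : ℝ) ≠ 0 := by linarith
  have hstep (a b : Fin n × Bool) (v : V) : Tendsto (fun l =>
      walkWeight v₀ (l + 1) a (FreeGroup.mk [a] • v) - walkWeight v₀ l b v) atTop (nhds 0) := by
    have h : Tendsto (fun l => (∑ c ∈ nextLetters a,
        (walkWeight v₀ l c v - walkWeight v₀ l b v)) / (2 * n - 1 : ℝ)) atTop (nhds 0) := by
      have := (tendsto_finsetSum (nextLetters a) fun c _ =>
        tendsto_walkWeight_sub_letter hn v₀ c b v).div_const (2 * n - 1 : ℝ)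
      simpa using this
    refine h.congr fun l => ?_
    have hc : ((nextLetters a).card : ℝ) = 2 * n - 1 := by
      rw [card_nextLetters, Nat.cast_sub (by omega)]
      push_cast
      ring
    rw [walkWeight_succ_smul, Finset.sum_sub_distrib, Finset.sum_const, nsmul_eq_mul, hc]
    field_simp
  induction w generalizing a with
  | nil =>
    rw [← FreeGroup.one_eq_mk]
    simpa using tendsto_walkWeight_sub_letter hn v₀ a b v
  | cons c w ih =>
    have hw : FreeGroup.mk (c :: w) • v = FreeGroup.mk [c] • FreeGroup.mk w • v := by
      rw [smul_smul, FreeGroup.mul_mk, List.singleton_append]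
    have h₁ := (tendsto_walkWeight_sub_letter hn v₀ a c (FreeGroup.mk (c :: w) • v)).comp
      (tendsto_add_atTop_nat (w.length + 1))
    have h₂ := (hstep c b (FreeGroup.mk w • v)).comp (tendsto_add_atTop_nat w.length)
    have h₃ := (h₁.add h₂).add (ih b)
    rw [add_zero, add_zero] at h₃
    refine h₃.congr fun l => ?_
    simp only [Function.comp_apply, hw, List.length_cons, add_assoc]
    ring

lemma tendsto_walkWeight_sq_smul_sub [Fintype V] (hn : 2 ≤ n) (v₀ : V)
    (g : FreeGroup (Fin n)) (a : Fin n × Bool) (v : V) :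
    Tendsto (fun l => walkWeight v₀ l a (g ^ 2 • v) - walkWeight v₀ l a v) atTop (nhds 0) := by
  obtain ⟨w, rfl⟩ : ∃ w, FreeGroup.mk w = g := ⟨g.toWord, FreeGroup.mk_toWord⟩
  have h₁ := tendsto_walkWeight_mk_smul_sub hn v₀ w a a (FreeGroup.mk w • v)
  have h₂ := tendsto_walkWeight_mk_smul_sub hn v₀ (FreeGroup.invRev w) a a (FreeGroup.mk w • v)
  rw [← FreeGroup.inv_mk, inv_smul_smul, FreeGroup.invRev_length] at h₂
  have h₃ := h₁.sub h₂
  rw [sub_zero] at h₃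
  rw [← tendsto_add_atTop_iff_nat w.length]
  refine h₃.congr fun l => ?_
  rw [smul_smul, ← sq]
  ring

lemma card_isReduced_cons (hn : 2 ≤ n) (v₀ : V) (l : ℕ) (a : Fin n × Bool) (v : V) :
    (Nat.card {w : List (Fin n × Bool) // FreeGroup.IsReduced (a :: w) ∧ w.length = l ∧
      FreeGroup.mk (a :: w) • v₀ = v} : ℝ) = (2 * n - 1) ^ l * walkWeight v₀ l a v := by
  have hn' : (2 : ℝ) ≤ n := by exact_mod_cast hn
  have hq : (2 * n - 1 : ℝ) ≠ 0 := by linarith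
  induction l generalizing a v with
  | zero =>
    rw [walkWeight, pow_zero, one_mul]
    split_ifs with h
    · have : Unique {w : List (Fin n × Bool) // FreeGroup.IsReduced (a :: w) ∧ w.length = 0 ∧
          FreeGroup.mk (a :: w) • v₀ = v} :=
        { default := ⟨[], FreeGroup.IsReduced.singleton, rfl, h⟩
          uniq := fun w => Subtype.ext (List.length_eq_zero_iff.1 w.2.2.1) }
      rw [Nat.card_unique, Nat.cast_one]
    · have : IsEmpty {w : List (Fin n × Bool) // FreeGroup.IsReduced (a :: w) ∧ w.length = 0 ∧
          FreeGroup.mk (a :: w) • v₀ = v} :=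
        ⟨fun ⟨w, _, hw, hv⟩ => h (by rwa [List.length_eq_zero_iff.1 hw] at hv)⟩
      rw [Nat.card_of_isEmpty, Nat.cast_zero]
  | succ l ih =>
    let e : {w : List (Fin n × Bool) // FreeGroup.IsReduced (a :: w) ∧ w.length = l + 1 ∧
          FreeGroup.mk (a :: w) • v₀ = v} ≃
        Σ b : nextLetters a, {w : List (Fin n × Bool) // FreeGroup.IsReduced (b.1 :: w) ∧
          w.length = l ∧ FreeGroup.mk (b.1 :: w) • v₀ = (FreeGroup.mk [a])⁻¹ • v} :=
      { toFun := fun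
          | ⟨[], h⟩ => absurd h.2.1 (by simp)
          | ⟨b :: w, h⟩ => ⟨⟨b, mem_nextLetters.2 (FreeGroup.isReduced_cons_cons.1 h.1).1⟩, w,
              (FreeGroup.isReduced_cons_cons.1 h.1).2, by simpa using h.2.1, by
                rw [eq_inv_smul_iff, smul_smul, FreeGroup.mul_mk]; exact h.2.2⟩
        invFun := fun ⟨b, w, h⟩ => ⟨b.1 :: w,
          FreeGroup.isReduced_cons_cons.2 ⟨mem_nextLetters.1 b.2, h.1⟩, by simpa using h.2.1, by
            have := h.2.2
            rw [eq_inv_smul_iff, smul_smul, FreeGroup.mul_mk] at this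
            exact this⟩
        left_inv := fun
          | ⟨[], h⟩ => absurd h.2.1 (by simp)
          | ⟨b :: w, h⟩ => rfl
        right_inv := fun ⟨b, w, h⟩ => rfl }
    have hfin (b : nextLetters a) : Finite {w : List (Fin n × Bool) //
        FreeGroup.IsReduced (b.1 :: w) ∧ w.length = l ∧
          FreeGroup.mk (b.1 :: w) • v₀ = (FreeGroup.mk [a])⁻¹ • v} :=
      ((List.finite_length_eq (Fin n × Bool) l).subset fun w hw => hw.2.1).to_subtype
    rw [Nat.card_congr e, Nat.card_sigma]
    push_cast
    simp only [ih]
    rw [Finset.sum_coe_sort (nextLetters a) (fun b : Fin n × Bool =>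
      (2 * n - 1 : ℝ) ^ l * walkWeight v₀ l b ((FreeGroup.mk [a])⁻¹ • v)), walkWeight,
      ← Finset.mul_sum]
    field_simp
    ring

instance finite_reducedWord (n l : ℕ) : Finite (ReducedWord n l) :=
  ((List.finite_length_eq (Fin n × Bool) l).subset fun _ hw => hw.2).to_subtype

lemma card_reducedWord_smul_eq (hn : 2 ≤ n) (v₀ : V) (l : ℕ) (v : V) :
    (Nat.card {w : ReducedWord n (l + 1) // FreeGroup.mk w.1 • v₀ = v} : ℝ) =
      (2 * n - 1) ^ l * ∑ a : Fin n × Bool, walkWeight v₀ l a v := by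
  let e : {w : ReducedWord n (l + 1) // FreeGroup.mk w.1 • v₀ = v} ≃
      Σ a : Fin n × Bool, {w : List (Fin n × Bool) // FreeGroup.IsReduced (a :: w) ∧
        w.length = l ∧ FreeGroup.mk (a :: w) • v₀ = v} :=
    { toFun := fun
        | ⟨⟨[], h⟩, _⟩ => absurd h.2 (by simp)
        | ⟨⟨a :: w, h⟩, hv⟩ => ⟨a, w, .of_reduce_eq h.1, by simpa using h.2, hv⟩
      invFun := fun ⟨a, w, h⟩ => ⟨⟨a :: w, h.1.reduce_eq, by simpa using h.2.1⟩, h.2.2⟩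
      left_inv := fun
        | ⟨⟨[], h⟩, _⟩ => absurd h.2 (by simp)
        | ⟨⟨a :: w, h⟩, hv⟩ => rfl
      right_inv := fun ⟨a, w, h⟩ => rfl }
  have hfin (a : Fin n × Bool) : Finite {w : List (Fin n × Bool) //
      FreeGroup.IsReduced (a :: w) ∧ w.length = l ∧ FreeGroup.mk (a :: w) • v₀ = v} :=
    ((List.finite_length_eq (Fin n × Bool) l).subset fun w hw => hw.2.1).to_subtype
  rw [Nat.card_congr e, Nat.card_sigma]
  push_cast
  simp only [card_isReduced_cons hn]
  rw [← Finset.mul_sum]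

lemma card_reducedWord_succ (hn : 2 ≤ n) (l : ℕ) :
    (Nat.card (ReducedWord n (l + 1)) : ℝ) = (2 * n - 1) ^ l * (2 * n) := by
  have h := card_reducedWord_smul_eq hn () l ()
  have h' := sum_walkWeight hn () l
  simp only [Finset.univ_unique, Finset.sum_singleton] at h'
  rw [show (default : Unit) = () from rfl] at h'
  rw [h'] at h
  rw [← h]
  exact congrArg _ (Nat.card_congr (Equiv.subtypeUnivEquiv fun _ => rfl).symm)

/-- The probability that a uniformly random reduced word of length `l` represents an element of
the subgroup `K`. -/
noncomputable def memProb (n l : ℕ) (K : Subgroup (FreeGroup (Fin n))) : ℝ :=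
  Nat.card {w : ReducedWord n l // FreeGroup.mk w.1 ∈ K} / Nat.card (ReducedWord n l)

lemma memProb_nonneg (l : ℕ) (K : Subgroup (FreeGroup (Fin n))) : 0 ≤ memProb n l K := by
  unfold memProb
  positivity

lemma memProb_le_one (l : ℕ) (K : Subgroup (FreeGroup (Fin n))) : memProb n l K ≤ 1 :=
  div_le_one_of_le₀ (by exact_mod_cast Finite.card_subtype_le _) (Nat.cast_nonneg _)

lemma eventually_memProb_le (hn : 2 ≤ n) (K : Subgroup (FreeGroup (Fin n))) [K.FiniteIndex]
    (t : FreeGroup (Fin n)) {m : ℕ} (hm : 0 < m)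
    (ht : Function.Injective fun j : Fin m => ((((t ^ (j : ℕ)) ^ 2 : FreeGroup (Fin n))) :
      FreeGroup (Fin n) ⧸ K)) :
    ∀ᶠ l in atTop, memProb n l K ≤ 2 / m := by
  classical
  have : Fintype (FreeGroup (Fin n) ⧸ K) := Fintype.ofFinite _
  have hn' : (2 : ℝ) ≤ n := by exact_mod_cast hn
  have hm' : (0 : ℝ) < m := by exact_mod_cast hm
  have hq : (0 : ℝ) < 2 * n - 1 := by linarith
  let v₀ : FreeGroup (Fin n) ⧸ K := ((1 : FreeGroup (Fin n)) : FreeGroup (Fin n) ⧸ K)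
  let v (j : Fin m) : FreeGroup (Fin n) ⧸ K := (t ^ (j : ℕ)) ^ 2 • v₀
  have hv : Function.Injective v := by
    convert ht using 2 with j
    simp only [v, v₀, MulAction.Quotient.smul_coe, smul_eq_mul, mul_one]
  have hlim : Tendsto (fun l => ∑ j : Fin m, ∑ a : Fin n × Bool,
      (walkWeight v₀ l a (v j) - walkWeight v₀ l a v₀)) atTop (nhds 0) := by
    have := tendsto_finsetSum (Finset.univ : Finset (Fin m)) fun j _ =>
      tendsto_finsetSum (Finset.univ : Finset (Fin n × Bool)) fun a _ =>
        tendsto_walkWeight_sq_smul_sub hn v₀ (t ^ (j : ℕ)) a v₀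
    simpa only [Finset.sum_const_zero] using this
  have hev : ∀ᶠ l in atTop, memProb n (l + 1) K ≤ 2 / m := by
    filter_upwards [hlim.eventually (lt_mem_nhds (show (-(2 * n) : ℝ) < 0 by linarith))] with l hl
    have hsum : ∑ j, ∑ a : Fin n × Bool, walkWeight v₀ l a (v j) ≤ 2 * n := by
      rw [← sum_walkWeight hn v₀ l, Finset.sum_comm]
      refine Finset.sum_le_sum fun a _ => ?_
      rw [← Finset.sum_image (f := fun v => walkWeight v₀ l a v) hv.injOn]
      exact Finset.sum_le_sum_of_subset_of_nonneg (Finset.subset_univ _)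
        fun _ _ _ => walkWeight_nonneg hn _ _ _ _
    simp only [Finset.sum_sub_distrib, Finset.sum_const, Finset.card_univ, Fintype.card_fin,
      nsmul_eq_mul] at hl
    have hcard : (Nat.card {w : ReducedWord n (l + 1) // FreeGroup.mk w.1 ∈ K} : ℝ) =
        (2 * n - 1) ^ l * ∑ a : Fin n × Bool, walkWeight v₀ l a v₀ := by
      rw [← card_reducedWord_smul_eq hn]
      refine congrArg _ (Nat.card_congr (Equiv.subtypeEquivRight fun w => ?_))
      rw [MulAction.Quotient.smul_coe, smul_eq_mul, mul_one, eq_comm, QuotientGroup.eq]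
      simp
    have hpow : (0 : ℝ) < (2 * n - 1) ^ l := pow_pos hq l
    rw [memProb, hcard, card_reducedWord_succ hn, mul_div_mul_left _ _ hpow.ne',
      div_le_div_iff₀ (by linarith) hm']
    linarith
  obtain ⟨N, hN⟩ := eventually_atTop.1 hev
  refine eventually_atTop.2 ⟨N + 1, fun l hl => ?_⟩
  obtain ⟨l, rfl⟩ : ∃ l', l = l' + 1 := ⟨l - 1, by omega⟩
  exact hN l (by omega)

end NonbacktrackingWalk

lemma wordProb_le_sum_memProb_pow {ι : Type*} [Fintype ι] {n l k : ℕ}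
    {P : (Fin k → FreeGroup (Fin n)) → Prop} (K : ι → Subgroup (FreeGroup (Fin n)))
    (h : ∀ R, P R → ∃ i, ∀ j, R j ∈ K i) :
    wordProb n l k P ≤ ∑ i, memProb n l (K i) ^ k := by
  simp only [memProb, div_pow]
  rw [wordProb, ← Finset.sum_div]
  refine div_le_div_of_nonneg_right ?_ (by positivity)
  choose f hf using h
  let g (R : {R : Fin k → ReducedWord n l // P fun i => FreeGroup.mk (R i).1}) :
      Σ i, Fin k → {w : ReducedWord n l // FreeGroup.mk w.1 ∈ K i} :=
    ⟨f _ R.2, fun j => ⟨R.1 j, hf _ R.2 j⟩⟩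
  have hg : Function.Injective g := by
    have hr (R) : (fun j => ((g R).2 j).1) = R.1 := rfl
    intro R R' hRR
    rw [Subtype.ext_iff, ← hr R, ← hr R', hRR]
  have := Nat.card_le_card_of_injective g hg
  rw [Nat.card_sigma] at this
  simp only [Nat.card_fun, Nat.card_fin] at this
  exact_mod_cast this

lemma finite_subgroup_index_le {G : Type*} [Group G] [Group.FG G] (M : ℕ) :
    {H : Subgroup G | 0 < H.index ∧ H.index ≤ M}.Finite := by
  have hfin (k : ℕ) : Finite (G →* Equiv.Perm (Fin k)) := by
    obtain ⟨S, hS, hSfin⟩ := Group.fg_iff.1 ‹Group.FG G›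
    have := hSfin.to_subtype
    refine Finite.of_injective (fun (φ : G →* Equiv.Perm (Fin k)) (s : S) => φ s) fun φ ψ h => ?_
    exact MonoidHom.eq_of_eqOn_dense hS fun s hs => congrFun h ⟨s, hs⟩
  refine (Set.finite_iUnion fun k : Fin (M + 1) => Set.finite_range
    fun x : (G →* Equiv.Perm (Fin k)) × Fin k =>
      (MulAction.stabilizer (Equiv.Perm (Fin k)) x.2).comap x.1).subset ?_
  rintro H ⟨h₀, h₁⟩
  have : Finite (G ⧸ H) := Subgroup.index_ne_zero_iff_finite.1 h₀.ne'
  let e : G ⧸ H ≃ Fin H.index := Finite.equivFin _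
  refine Set.mem_iUnion.2 ⟨⟨H.index, by omega⟩, ⟨⟨e.permCongrHom.toMonoidHom.comp
    (MulAction.toPermHom G (G ⧸ H)), e ((1 : G) : G ⧸ H)⟩, ?_⟩⟩
  ext g
  have : (g : G ⧸ H) = ((1 : G) : G ⧸ H) ↔ g ∈ H := by
    rw [eq_comm, QuotientGroup.eq]
    simp
  simpa [MulAction.mem_stabilizer_iff, Subgroup.mem_comap, Equiv.permCongrHom] using this

lemma finite_monoidHom_of_closure_eq_top {G A : Type*} [Group G] [Group A] [Finite A]
    {S : Finset G} (hS : Subgroup.closure (S : Set G) = ⊤) :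
    Finite (G →* A) ∧ Nat.card (G →* A) ≤ Nat.card A ^ S.card := by
  have hinj : Function.Injective fun (φ : G →* A) (s : S) => φ s := fun φ ψ h =>
    MonoidHom.eq_of_eqOn_dense hS fun s hs => congrFun h ⟨s, hs⟩
  refine ⟨Finite.of_injective _ hinj, ?_⟩
  simpa [Nat.card_fun] using Nat.card_le_card_of_injective _ hinj

lemma finite_monoidHom_of_index_le {n M : ℕ} {A : Type*} [Group A] [Finite A]
    {H : Subgroup (FreeGroup (Fin n))} (h₀ : 0 < H.index) (h₁ : H.index ≤ M) :
    Finite (H →* A) ∧ Nat.card (H →* A) ≤ Nat.card A ^ (M * n) := by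
  classical
  have : H.FiniteIndex := ⟨h₀.ne'⟩
  have hS : Subgroup.closure ((Finset.univ.image (FreeGroup.of : Fin n → _) : Finset _) :
      Set (FreeGroup (Fin n))) = ⊤ := by
    simp [FreeGroup.closure_range_of]
  obtain ⟨T, hT, hTtop⟩ := Subgroup.exists_finset_card_le_mul H hS
  obtain ⟨hfin, hcard⟩ := finite_monoidHom_of_closure_eq_top (A := A) hTtop
  refine ⟨hfin, hcard.trans (Nat.pow_le_pow_right Nat.card_pos (hT.trans ?_))⟩
  refine Nat.mul_le_mul h₁ (Finset.card_image_le.trans ?_)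
  simp

/-- The pairs of a subgroup `H` of index at most `M` in the free group of rank `n` and a surjective
homomorphism from `H` onto the cyclic group of order `m`. -/
def CyclicQuotientPair (n M m : ℕ) : Type :=
  Σ H : {H : Subgroup (FreeGroup (Fin n)) // 0 < H.index ∧ H.index ≤ M},
    {φ : H.1 →* Multiplicative (ZMod m) // Function.Surjective φ}

namespace CyclicQuotientPair

variable {n M m : ℕ}

/-- The kernel of the homomorphism, as a subgroup of the free group. -/
def kernel (x : CyclicQuotientPair n M m) : Subgroup (FreeGroup (Fin n)) :=
  x.2.1.ker.map x.1.1.subtype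

lemma finite_and_card_le [NeZero m] : Finite (CyclicQuotientPair n M m) ∧
    Nat.card (CyclicQuotientPair n M m) ≤
      Nat.card {H : Subgroup (FreeGroup (Fin n)) // 0 < H.index ∧ H.index ≤ M} * m ^ (M * n) := by
  have hH : Finite {H : Subgroup (FreeGroup (Fin n)) // 0 < H.index ∧ H.index ≤ M} :=
    (finite_subgroup_index_le M).to_subtype
  have := Fintype.ofFinite {H : Subgroup (FreeGroup (Fin n)) // 0 < H.index ∧ H.index ≤ M}
  have hφ (H : {H : Subgroup (FreeGroup (Fin n)) // 0 < H.index ∧ H.index ≤ M}) :=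
    finite_monoidHom_of_index_le (A := Multiplicative (ZMod m)) H.2.1 H.2.2
  have hfin (H : {H : Subgroup (FreeGroup (Fin n)) // 0 < H.index ∧ H.index ≤ M}) :
      Finite {φ : H.1 →* Multiplicative (ZMod m) // Function.Surjective φ} :=
    have := (hφ H).1
    inferInstance
  refine ⟨inferInstanceAs (Finite (Σ H : {H : Subgroup (FreeGroup (Fin n)) //
    0 < H.index ∧ H.index ≤ M},
      {φ : H.1 →* Multiplicative (ZMod m) // Function.Surjective φ})), ?_⟩
  rw [CyclicQuotientPair, Nat.card_sigma, Nat.card_eq_fintype_card, ← Finset.card_univ,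
    ← smul_eq_mul]
  refine Finset.sum_le_card_nsmul _ _ _ fun H _ => ?_
  have := (hφ H).1
  refine (Finite.card_subtype_le _).trans ((hφ H).2.trans_eq ?_)
  rw [Nat.card_congr (Multiplicative.toAdd : Multiplicative (ZMod m) ≃ ZMod m), Nat.card_zmod]

lemma eventually_memProb_kernel_le (hn : 2 ≤ n) (hm : Odd m) (x : CyclicQuotientPair n M m) :
    ∀ᶠ l in atTop, memProb n l x.kernel ≤ 2 / m := by
  obtain ⟨⟨H, h₀, h₁⟩, φ, hφ⟩ := x
  have : NeZero m := ⟨hm.pos.ne'⟩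
  have hH : H.FiniteIndex := ⟨h₀.ne'⟩
  have hK : (φ.ker.map H.subtype).FiniteIndex :=
    ⟨by
      rw [Subgroup.index_map_subtype]
      exact mul_ne_zero Subgroup.FiniteIndex.index_ne_zero h₀.ne'⟩
  obtain ⟨t, ht⟩ := hφ (Multiplicative.ofAdd 1)
  refine eventually_memProb_le hn (φ.ker.map H.subtype) t hm.pos fun i j hij => ?_
  have hmem := QuotientGroup.eq.1 hij
  obtain ⟨y, hy, hyt⟩ := Subgroup.mem_map.1 hmem
  obtain rfl : y = ((t ^ (i : ℕ)) ^ 2)⁻¹ * (t ^ (j : ℕ)) ^ 2 :=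
    Subtype.ext (by simpa using hyt)
  rw [MonoidHom.mem_ker, map_mul, map_inv, inv_mul_eq_one, map_pow, map_pow, map_pow, map_pow,
    ht, ← ofAdd_nsmul, ← ofAdd_nsmul, ← ofAdd_nsmul, ← ofAdd_nsmul,
    Multiplicative.ofAdd.apply_eq_iff_eq, smul_smul, smul_smul, nsmul_one, nsmul_one,
    ZMod.natCast_eq_natCast_iff] at hy
  have := Nat.ModEq.cancel_left_of_coprime (Nat.coprime_two_right.2 hm) hy
  exact Fin.ext (this.eq_of_lt_of_lt i.2 j.2)

/-- A tuple of relators whose quotient group virtually surjects onto `ℤ` lies in the kernel of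
a surjection of a finite index subgroup onto a cyclic group of given order. -/
lemma exists_forall_mem_kernel {k : ℕ} (R : Fin k → FreeGroup (Fin n))
    (h : ∃ H : Subgroup (FreeGroup (Fin n) ⧸ Subgroup.normalClosure (Set.range R)),
      0 < H.index ∧ H.index ≤ M ∧ ∃ φ : H →* Multiplicative ℤ, Function.Surjective φ) :
    ∃ x : CyclicQuotientPair n M m, ∀ j, R j ∈ x.kernel := by
  obtain ⟨H, h₀, h₁, φ, hφ⟩ := h
  let π := QuotientGroup.mk' (Subgroup.normalClosure (Set.range R))
  have hπ : Function.Surjective π := QuotientGroup.mk'_surjective _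
  have hidx : (H.comap π).index = H.index := H.index_comap_of_surjective hπ
  let r : Multiplicative ℤ →* Multiplicative (ZMod m) :=
    AddMonoidHom.toMultiplicative (Int.castAddHom (ZMod m))
  have hr : Function.Surjective r := fun z => by
    obtain ⟨a, ha⟩ := ZMod.intCast_surjective z.toAdd
    exact ⟨Multiplicative.ofAdd a, ha⟩
  let ψ : H.comap π →* Multiplicative (ZMod m) := (r.comp φ).comp (π.subgroupComap H)
  have hψ : Function.Surjective ψ :=
    (hr.comp hφ).comp (π.subgroupComap_surjective_of_surjective H hπ)
  refine ⟨⟨⟨H.comap π, by omega, by omega⟩, ψ, hψ⟩, fun j => ?_⟩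
  have hR : π (R j) = 1 := (QuotientGroup.eq_one_iff _).2
    (Subgroup.subset_normalClosure (Set.mem_range_self j))
  have hmem : R j ∈ H.comap π := by
    rw [Subgroup.mem_comap, hR]
    exact H.one_mem
  refine Subgroup.mem_map.2 ⟨⟨R j, hmem⟩, ?_, rfl⟩
  have : π.subgroupComap H ⟨R j, hmem⟩ = 1 := Subtype.ext hR
  rw [MonoidHom.mem_ker]
  change r (φ (π.subgroupComap H ⟨R j, hmem⟩)) = 1
  rw [this, map_one, map_one]

end CyclicQuotientPair

/-- For every `M` there is a constant `c'(M)` such that the probability that the random group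
`⟨x_1, …, x_n ∣ R⟩` (with `ρ(l) ≥ c'(M)` relators, chosen uniformly and independently among
reduced words of length `l`) has a subgroup of index at most `M` surjecting onto `ℤ`
tends to `0` as `l → ∞`. -/
theorem random_group_no_finite_index_subgroup_surjecting_onto_Z
    (n : ℕ) (hn : 2 ≤ n) (M : ℕ) :
    ∃ c' : ℕ,
      ∀ ρ : ℕ → ℕ, (∀ l, c' ≤ ρ l) →
        Tendsto (fun l => wordProb n l (ρ l) fun R =>
            ∃ H : Subgroup (FreeGroup (Fin n) ⧸ Subgroup.normalClosure (Set.range R)),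
              0 < H.index ∧ H.index ≤ M ∧
              ∃ φ : H →* Multiplicative ℤ, Function.Surjective φ)
          atTop (nhds 0) := by
  refine ⟨M * n + 1, fun ρ hρ => ?_⟩
  set N := Nat.card {H : Subgroup (FreeGroup (Fin n)) // 0 < H.index ∧ H.index ≤ M}
  have hnonneg (l : ℕ) (P : (Fin (ρ l) → FreeGroup (Fin n)) → Prop) :
      0 ≤ wordProb n l (ρ l) P := by
    unfold wordProb
    positivity
  refine tendsto_order.2 ⟨fun a ha => .of_forall fun l => ha.trans_le (hnonneg l _),
    fun ε hε => ?_⟩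
  obtain ⟨s, hs⟩ := exists_nat_gt (N * 2 ^ (M * n + 1) / ε)
  let m := 2 * s + 1
  have hm : Odd m := ⟨s, rfl⟩
  have : NeZero m := ⟨hm.pos.ne'⟩
  have hm' : (0 : ℝ) < m := by exact_mod_cast hm.pos
  obtain ⟨hfin, hcard⟩ := CyclicQuotientPair.finite_and_card_le (n := n) (M := M) (m := m)
  have := Fintype.ofFinite (CyclicQuotientPair n M m)
  filter_upwards [eventually_all.2 fun x : CyclicQuotientPair n M m =>
    x.eventually_memProb_kernel_le hn hm] with l hl
  have hbound : N * 2 ^ (M * n + 1) / (m : ℝ) < ε := by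
    rw [div_lt_iff₀ hε] at hs
    rw [div_lt_iff₀ hm', mul_comm ε]
    refine hs.trans_le ?_
    gcongr
    simp only [m]
    omega
  calc wordProb n l (ρ l) _
      ≤ ∑ x : CyclicQuotientPair n M m, memProb n l x.kernel ^ ρ l :=
        wordProb_le_sum_memProb_pow _ fun R => CyclicQuotientPair.exists_forall_mem_kernel R
    _ ≤ ∑ x : CyclicQuotientPair n M m, (2 / m : ℝ) ^ (M * n + 1) := by
        refine Finset.sum_le_sum fun x _ => ?_
        exact (pow_le_pow_of_le_one (memProb_nonneg l _) (memProb_le_one l _) (hρ l)).trans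
          (pow_le_pow_left₀ (memProb_nonneg l _) (hl x) _)
    _ = Nat.card (CyclicQuotientPair n M m) * (2 / m : ℝ) ^ (M * n + 1) := by
        rw [Finset.sum_const, Finset.card_univ, nsmul_eq_mul, Nat.card_eq_fintype_card]
    _ ≤ (N * m ^ (M * n) : ℕ) * (2 / m : ℝ) ^ (M * n + 1) := by gcongr
    _ = N * 2 ^ (M * n + 1) / m := by
        push_cast
        rw [div_pow, pow_succ (m : ℝ)]
        field_simp
    _ < ε := hbound
end

section
/- Let G be a finite group and X → G a function whose image generates G, and suppose H ≤ G is a subgroup of index 2 with x_i ∉ H for all i ∈ {1,…,n}. Then every reduced word of even length evaluates in G to an element of H and every reduced word of odd length evaluates to an element of G ∖ H; moreover, for every g ∈ H the proportion |{w ∈ S_{2l} : w =_G g}| / |S_{2l}| converges to 2/|G| as l → ∞, and for every g ∈ G ∖ H the proportion |{w ∈ S_{2l+1} : w =_G g}| / |S_{2l+1}| converges to 2/|G| as l → ∞. -/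
open Filter

/-- Words in the alphabet `X ∪ X⁻¹` with `X = {x_1, …, x_n}` are lists of letters `(i, b)`,
the letter being `x_i` if `b = true` and `x_i⁻¹` if `b = false`.  `evalWord φ w` is the image
of the word `w` in `G` under the homomorphism `F(X) → G` induced by `φ : X → G`. -/
def evalWord {n : ℕ} {G : Type*} [Group G] (φ : Fin n → G) (w : List (Fin n × Bool)) : G :=
  FreeGroup.lift φ (FreeGroup.mk w)

/-- The formal inverse of a letter. -/
def letterInv {n : ℕ} (a : Fin n × Bool) : Fin n × Bool := (a.1, !a.2)

/-- The finite set of reduced words of length `l`. -/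
def reducedWords (n : ℕ) : ℕ → Finset (List (Fin n × Bool))
  | 0 => {[]}
  | l + 1 =>
    ((Finset.univ ×ˢ reducedWords n l).filter
      (fun p => FreeGroup.reduce (p.1 :: p.2) = p.1 :: p.2)).map
      ⟨fun p => p.1 :: p.2, fun p q h => by
        simp only [List.cons.injEq] at h
        exact Prod.ext h.1 h.2⟩

theorem letterInv_letterInv {n : ℕ} (a : Fin n × Bool) : letterInv (letterInv a) = a := by
  simp [letterInv]

theorem letterInv_bijective {n : ℕ} : Function.Bijective (letterInv (n := n)) :=
  Function.Involutive.bijective letterInv_letterInv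

theorem reduce_cons_cons_eq_iff {n : ℕ} (a b : Fin n × Bool) (w : List (Fin n × Bool)) :
    FreeGroup.reduce (a :: b :: w) = a :: b :: w ↔
      a ≠ letterInv b ∧ FreeGroup.reduce (b :: w) = b :: w := by
  rw [← FreeGroup.isReduced_iff_reduce_eq, ← FreeGroup.isReduced_iff_reduce_eq,
    FreeGroup.IsReduced, List.isChain_cons_cons, FreeGroup.IsReduced]
  refine and_congr_left fun _ => ?_
  obtain ⟨i, s⟩ := a
  obtain ⟨j, t⟩ := b
  cases s <;> cases t <;> simp [letterInv]

theorem reduce_singleton_eq {n : ℕ} (a : Fin n × Bool) : FreeGroup.reduce [a] = [a] :=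
  FreeGroup.isReduced_iff_reduce_eq.1 FreeGroup.IsReduced.singleton

theorem mem_reducedWords {n : ℕ} (l : ℕ) (w : List (Fin n × Bool)) :
    w ∈ reducedWords n l ↔ FreeGroup.reduce w = w ∧ w.length = l := by
  induction l generalizing w with
  | zero => cases w <;> simp [reducedWords]
  | succ l ih =>
    cases w with
    | nil => simp [reducedWords]
    | cons a w =>
      simp only [reducedWords, Finset.mem_map, Finset.mem_filter, Finset.mem_product,
        Finset.mem_univ, true_and, List.length_cons, Nat.add_right_cancel_iff]
      constructor
      · rintro ⟨⟨b, u⟩, ⟨hu, hr⟩, h⟩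
        obtain ⟨rfl, rfl⟩ := List.cons.inj h
        exact ⟨hr, ((ih _).1 hu).2⟩
      · rintro ⟨hr, hl⟩
        refine ⟨(a, w), ⟨(ih w).2 ⟨?_, hl⟩, hr⟩, rfl⟩
        cases w with
        | nil => rfl
        | cons b w => exact ((reduce_cons_cons_eq_iff a b w).1 hr).2

theorem sum_reducedWords_succ {n : ℕ} (l : ℕ) (f : List (Fin n × Bool) → ℝ) :
    ∑ w ∈ reducedWords n (l + 1), f w =
      ∑ w ∈ reducedWords n l, ∑ a : Fin n × Bool,
        if FreeGroup.reduce (a :: w) = a :: w then f (a :: w) else 0 := by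
  rw [reducedWords, Finset.sum_map, Finset.sum_filter, Finset.sum_product_right]
  rfl

theorem evalWord_nil {n : ℕ} {G : Type*} [Group G] (φ : Fin n → G) : evalWord φ [] = 1 := by
  simp [evalWord]

theorem evalWord_cons {n : ℕ} {G : Type*} [Group G] (φ : Fin n → G) (a : Fin n × Bool)
    (w : List (Fin n × Bool)) : evalWord φ (a :: w) = evalWord φ [a] * evalWord φ w := by
  simp [evalWord]

theorem evalWord_letterInv {n : ℕ} {G : Type*} [Group G] (φ : Fin n → G) (a : Fin n × Bool) :
    evalWord φ [letterInv a] = (evalWord φ [a])⁻¹ := by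
  obtain ⟨i, s⟩ := a
  cases s <;> simp [evalWord, letterInv]

theorem evalWord_letterInv_cons_cons {n : ℕ} {G : Type*} [Group G] (φ : Fin n → G)
    (a : Fin n × Bool) (w : List (Fin n × Bool)) :
    evalWord φ (letterInv a :: a :: w) = evalWord φ w := by
  rw [evalWord_cons, evalWord_cons φ a, evalWord_letterInv, inv_mul_cancel_left]

/-- The number of ways to prolong a reduced word of length `l` by one letter. -/
def branching (n l : ℕ) : ℝ := if l = 0 then 2 * n else 2 * n - 1

theorem sum_prolongations {n : ℕ} {l : ℕ} {w : List (Fin n × Bool)}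
    (hw : w ∈ reducedWords n l) (c : ℝ) :
    (∑ a : Fin n × Bool, if FreeGroup.reduce (a :: w) = a :: w then c else 0) =
      branching n l * c := by
  rw [mem_reducedWords] at hw
  obtain ⟨hr, rfl⟩ := hw
  cases w with
  | nil =>
    simp only [reduce_singleton_eq, if_true, Finset.sum_const, Finset.card_univ,
      Fintype.card_prod, Fintype.card_fin, Fintype.card_bool, nsmul_eq_mul, branching,
      List.length_nil]
    push_cast
    ring
  | cons b w =>
    have h : ∀ a : Fin n × Bool,
        (if FreeGroup.reduce (a :: b :: w) = a :: b :: w then c else 0) =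
          c - if a = letterInv b then c else 0 := by
      intro a
      by_cases hab : a = letterInv b <;>
        simp only [reduce_cons_cons_eq_iff, hr, hab, ne_eq, not_true_eq_false, not_false_eq_true,
          and_true, if_true, if_false, sub_self, sub_zero]
    simp only [h, Finset.sum_sub_distrib, Finset.sum_ite_eq', Finset.mem_univ, if_true,
      Finset.sum_const, Finset.card_univ, Fintype.card_prod, Fintype.card_fin,
      Fintype.card_bool, nsmul_eq_mul, branching, List.length_cons, Nat.add_eq_zero_iff,
      one_ne_zero, and_false, if_false]
    push_cast
    ring

/-- The sum of `v` over the values of all reduced words of length `l`. -/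
def walkSum {n : ℕ} {G : Type*} [Group G] (φ : Fin n → G) (v : G → ℝ) (l : ℕ) : ℝ :=
  ∑ w ∈ reducedWords n l, v (evalWord φ w)

/-- The adjacency operator of the Cayley graph. -/
def adjacency {n : ℕ} {G : Type*} [Group G] (φ : Fin n → G) (v : G → ℝ) (g : G) : ℝ :=
  ∑ a : Fin n × Bool, v (evalWord φ [a] * g)

theorem walkSum_adjacency {n : ℕ} {G : Type*} [Group G] (φ : Fin n → G) (v : G → ℝ) (l : ℕ) :
    walkSum φ (adjacency φ v) (l + 1) =
      walkSum φ v (l + 2) + branching n l * walkSum φ v l := by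
  have hsplit : walkSum φ (adjacency φ v) (l + 1) - walkSum φ v (l + 2) =
      ∑ w ∈ reducedWords n (l + 1), ∑ a : Fin n × Bool,
        if FreeGroup.reduce (a :: w) = a :: w then 0 else v (evalWord φ (a :: w)) := by
    rw [walkSum, walkSum, sum_reducedWords_succ (l + 1), ← Finset.sum_sub_distrib]
    refine Finset.sum_congr rfl fun w _ => ?_
    rw [adjacency, ← Finset.sum_sub_distrib]
    refine Finset.sum_congr rfl fun a _ => ?_
    rw [← evalWord_cons]
    split_ifs <;> simp only [sub_self, sub_zero]
  have hback : ∑ w ∈ reducedWords n (l + 1), (∑ a : Fin n × Bool,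
        if FreeGroup.reduce (a :: w) = a :: w then 0 else v (evalWord φ (a :: w))) =
      branching n l * walkSum φ v l := by
    rw [sum_reducedWords_succ, walkSum, Finset.mul_sum]
    refine Finset.sum_congr rfl fun w hw => ?_
    rw [← sum_prolongations hw]
    refine Finset.sum_congr rfl fun b _ => ?_
    by_cases hb : FreeGroup.reduce (b :: w) = b :: w
    · rw [if_pos hb, if_pos hb, Finset.sum_eq_single (letterInv b)]
      · rw [if_neg fun h => ((reduce_cons_cons_eq_iff _ _ _).1 h).1 rfl,
          evalWord_letterInv_cons_cons]
      · intro a _ hab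
        rw [if_pos ((reduce_cons_cons_eq_iff a b w).2 ⟨hab, hb⟩)]
      · simp
    · rw [if_neg hb, if_neg hb]
  linarith

theorem card_reducedWords_succ (n l : ℕ) :
    ((reducedWords n (l + 1)).card : ℝ) = 2 * n * (2 * n - 1) ^ l := by
  have hstep : ∀ l, ((reducedWords n (l + 1)).card : ℝ) =
      branching n l * (reducedWords n l).card := by
    intro l
    have h := sum_reducedWords_succ (n := n) l (fun _ => 1)
    rw [Finset.sum_congr rfl fun w hw => sum_prolongations hw 1] at h
    simpa [mul_comm] using h
  induction l with
  | zero => rw [hstep]; simp [reducedWords, branching]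
  | succ l ih =>
    rw [hstep, ih, branching, if_neg (Nat.succ_ne_zero l)]
    ring

theorem abs_lt_one_of_quadratic_root {a b x : ℝ} (hb : b < 1)
    (ha : |a| < 1 + b) (hx : x ^ 2 - a * x + b = 0) : |x| < 1 := by
  rw [abs_lt] at ha ⊢
  constructor <;> by_contra! h
  · nlinarith [mul_nonneg (sub_nonneg.2 h) (by linarith : 0 ≤ -x - b)]
  · nlinarith [mul_nonneg (sub_nonneg.2 h) (by linarith : 0 ≤ x - b)]

theorem norm_lt_one_of_quadratic_root {a b : ℝ} (hb : b < 1) (ha : |a| < 1 + b)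
    {z : ℂ} (hz : z ^ 2 - a * z + b = 0) : ‖z‖ < 1 := by
  have hre := congrArg Complex.re hz
  have him := congrArg Complex.im hz
  simp [pow_two] at hre him
  have hnorm : ‖z‖ ^ 2 = z.re ^ 2 + z.im ^ 2 := by
    rw [← Complex.normSq_eq_norm_sq, Complex.normSq_apply]; ring
  have hsq : ‖z‖ ^ 2 < 1 := by
    rw [hnorm]
    by_cases h0 : z.im = 0
    · have h1 := abs_lt_one_of_quadratic_root (x := z.re) hb ha (by rw [h0] at hre; linarith)
      rw [h0, ← sq_abs]
      nlinarith [abs_nonneg z.re]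
    · have h1 : a = 2 * z.re := mul_right_cancel₀ h0 (by linarith)
      rw [h1] at hre
      linarith
  nlinarith [norm_nonneg z]

theorem tendsto_zero_of_affine_recurrence {r : ℂ} (hr : ‖r‖ < 1) {d e : ℕ → ℂ}
    (he : Tendsto e atTop (nhds 0)) (hd : ∀ l, d (l + 1) = r * d l + e l) :
    Tendsto d atTop (nhds 0) := by
  have hr' : 0 < 1 - ‖r‖ := sub_pos.2 hr
  rw [Metric.tendsto_atTop] at he ⊢
  intro ε hε
  obtain ⟨N, hN⟩ := he (ε / 2 * (1 - ‖r‖)) (by positivity)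
  have hbound : ∀ k, ‖d (N + k)‖ ≤ ‖r‖ ^ k * ‖d N‖ + ε / 2 := by
    intro k
    induction k with
    | zero => simpa using (half_pos hε).le
    | succ k ih =>
      have h1 := hN (N + k) (Nat.le_add_right N k)
      rw [dist_zero_right] at h1
      have h2 : ‖d (N + k + 1)‖ ≤ ‖r‖ * ‖d (N + k)‖ + ‖e (N + k)‖ := by
        rw [hd, ← norm_mul]
        exact norm_add_le _ _
      have h3 := mul_le_mul_of_nonneg_left ih (norm_nonneg r)
      rw [← add_assoc, pow_succ']
      linarith
  have hlim : Tendsto (fun k => ‖r‖ ^ k * ‖d N‖) atTop (nhds 0) := by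
    simpa using (tendsto_pow_atTop_nhds_zero_of_lt_one (norm_nonneg r) hr).mul_const ‖d N‖
  obtain ⟨K, hK⟩ := eventually_atTop.1 (hlim.eventually_lt_const (half_pos hε))
  refine ⟨N + K, fun l hl => ?_⟩
  obtain ⟨k, rfl⟩ := Nat.exists_eq_add_of_le (show N ≤ l by omega)
  rw [dist_zero_right]
  linarith [hbound k, hK k (by omega)]

theorem tendsto_zero_of_linear_recurrence {a b : ℝ} (hb : b < 1) (ha : |a| < 1 + b)
    {d : ℕ → ℝ} (hd : ∀ l, d (l + 2) = a * d (l + 1) - b * d l) :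
    Tendsto d atTop (nhds 0) := by
  obtain ⟨s, hs⟩ := IsAlgClosed.exists_pow_nat_eq (discrim (1 : ℂ) (-a) b) two_pos
  obtain ⟨z, hz⟩ := exists_quadratic_eq_zero (a := (1 : ℂ)) (b := -a) (c := b) one_ne_zero
    ⟨s, by rw [← hs, sq]⟩
  have hz1 : ‖z‖ < 1 := norm_lt_one_of_quadratic_root hb ha (by linear_combination hz)
  have hz2 : ‖(a : ℂ) - z‖ < 1 :=
    norm_lt_one_of_quadratic_root hb ha (by linear_combination hz)
  have hd' : ∀ l, (d (l + 2) : ℂ) = a * d (l + 1) - b * d l := fun l => by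
    rw [hd]; push_cast; ring
  have he : Tendsto (fun l => (d (l + 1) : ℂ) - z * d l) atTop (nhds 0) :=
    tendsto_zero_of_affine_recurrence (e := fun _ => 0) hz2 tendsto_const_nhds fun l => by
      linear_combination hd' l - (d l : ℂ) * hz
  have hdc : Tendsto (fun l => (d l : ℂ)) atTop (nhds 0) :=
    tendsto_zero_of_affine_recurrence hz1 he fun l => by ring
  have h := (Complex.continuous_re.tendsto 0).comp hdc
  simpa [Function.comp_def] using h

theorem adjacency_symm {n : ℕ} {G : Type*} [Group G] [Fintype G] (φ : Fin n → G)
    (v w : G → ℝ) : ∑ g, adjacency φ v g * w g = ∑ g, v g * adjacency φ w g := by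
  simp only [adjacency, Finset.sum_mul, Finset.mul_sum]
  rw [Finset.sum_comm, Finset.sum_comm (s := Finset.univ (α := G))]
  rw [← letterInv_bijective.sum_comp]
  refine Finset.sum_congr rfl fun a _ => ?_
  rw [← Equiv.sum_comp (Equiv.mulLeft (evalWord φ [a]))]
  simp [evalWord_letterInv]

theorem sum_sq_shift {G : Type*} [Group G] [Fintype G] (v : G → ℝ) (h : G) :
    ∑ g, v (h * g) ^ 2 = ∑ g, v g ^ 2 :=
  Equiv.sum_comp (Equiv.mulLeft h) (fun g => v g ^ 2)

/-- The Dirichlet form of the adjacency operator, twisted by a sign `s`. -/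
theorem sum_sq_sub_eq {n : ℕ} {G : Type*} [Group G] [Fintype G] (φ : Fin n → G)
    {v : G → ℝ} {μ s : ℝ} (hs : s ^ 2 = 1) (hv : ∀ g, adjacency φ v g = μ * v g) :
    ∑ a : Fin n × Bool, ∑ g, (v (evalWord φ [a] * g) - s * v g) ^ 2 =
      2 * (2 * n - s * μ) * ∑ g, v g ^ 2 := by
  have h1 : ∑ a : Fin n × Bool, ∑ g, v (evalWord φ [a] * g) * v g = μ * ∑ g, v g ^ 2 := by
    rw [Finset.sum_comm, Finset.mul_sum]
    refine Finset.sum_congr rfl fun g _ => ?_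
    rw [← Finset.sum_mul, ← adjacency, hv]
    ring
  have h2 : ∀ a : Fin n × Bool, ∑ g, (v (evalWord φ [a] * g) - s * v g) ^ 2 =
      2 * ∑ g, v g ^ 2 - 2 * s * ∑ g, v (evalWord φ [a] * g) * v g := by
    intro a
    have h3 : ∀ g, (v (evalWord φ [a] * g) - s * v g) ^ 2 = v (evalWord φ [a] * g) ^ 2 +
        v g ^ 2 - 2 * s * (v (evalWord φ [a] * g) * v g) := fun g => by
      linear_combination (v g) ^ 2 * hs
    simp only [h3, Finset.sum_sub_distrib, Finset.sum_add_distrib, sum_sq_shift,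
      ← Finset.mul_sum]
    ring
  simp only [h2, Finset.sum_sub_distrib, ← Finset.mul_sum, h1]
  simp
  ring

theorem mul_eigenvalue_le {n : ℕ} {G : Type*} [Group G] [Fintype G] (φ : Fin n → G)
    {v : G → ℝ} (hv0 : v ≠ 0) {μ s : ℝ} (hs : s ^ 2 = 1)
    (hv : ∀ g, adjacency φ v g = μ * v g) : s * μ ≤ 2 * n := by
  have h := sum_sq_sub_eq φ hs hv
  have h1 : 0 ≤ ∑ a : Fin n × Bool, ∑ g, (v (evalWord φ [a] * g) - s * v g) ^ 2 := by
    positivity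
  have h2 : 0 < ∑ g, v g ^ 2 := by
    obtain ⟨g, hg⟩ := Function.ne_iff.1 hv0
    exact Finset.sum_pos' (fun _ _ => sq_nonneg _) ⟨g, Finset.mem_univ g, sq_pos_of_ne_zero hg⟩
  by_contra! hlt
  nlinarith

theorem eq_mul_of_extremal_eigenvalue {n : ℕ} {G : Type*} [Group G] [Fintype G]
    (φ : Fin n → G) (hgen : Subgroup.closure (Set.range φ) = ⊤) {v : G → ℝ} (χ : G →* ℝ)
    {s : ℝ} (hs : s ^ 2 = 1) (hχ : ∀ i, χ (φ i) = s)
    (hv : ∀ g, adjacency φ v g = s * (2 * n) * v g) (g : G) : v g = χ g * v 1 := by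
  have h := sum_sq_sub_eq φ hs hv
  have h0 : 2 * (2 * n - s * (s * (2 * n))) * ∑ g, v g ^ 2 = 0 := by
    linear_combination (-(4 * n) * ∑ g, v g ^ 2) * hs
  rw [h0, Finset.sum_eq_zero_iff_of_nonneg fun _ _ => by positivity] at h
  have hφ : ∀ i g, v (φ i * g) = s * v g := by
    intro i g
    have h1 := h (i, true) (Finset.mem_univ _)
    rw [Finset.sum_eq_zero_iff_of_nonneg fun _ _ => by positivity] at h1
    have h2 := h1 g (Finset.mem_univ _)
    simp [evalWord] at h2
    linarith
  have hall : ∀ x ∈ Subgroup.closure (Set.range φ), ∀ g, v (x * g) = χ x * v g := by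
    intro x hx
    induction hx using Subgroup.closure_induction with
    | mem x hx =>
      obtain ⟨i, rfl⟩ := hx
      rw [hχ]
      exact hφ i
    | one => simp
    | mul x y _ _ hx hy =>
      intro g
      rw [mul_assoc, hx, hy, map_mul, mul_assoc]
    | inv x _ hx =>
      intro g
      have h1 := hx (x⁻¹ * g)
      have h2 : χ x⁻¹ * χ x = 1 := by rw [← map_mul]; simp
      rw [mul_inv_cancel_left] at h1
      rw [h1, ← mul_assoc, h2, one_mul]
  simpa using hall g (hgen ▸ Subgroup.mem_top g) 1

theorem map_evalWord {n : ℕ} {G : Type*} [Group G] (φ : Fin n → G) (χ : G →* ℝ)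
    {s : ℝ} (hs : s ^ 2 = 1) (hχ : ∀ i, χ (φ i) = s) (w : List (Fin n × Bool)) :
    χ (evalWord φ w) = s ^ w.length := by
  induction w with
  | nil => simp [evalWord_nil]
  | cons a w ih =>
    rw [evalWord_cons, map_mul, ih, List.length_cons, pow_succ']
    congr 1
    obtain ⟨i, t⟩ := a
    cases t
    · have h2 : χ (φ i)⁻¹ * χ (φ i) = 1 := by rw [← map_mul]; simp
      rw [hχ] at h2
      simp only [evalWord, FreeGroup.lift_mk, List.map_cons, cond_false, List.map_nil,
        List.prod_cons, List.prod_nil, mul_one]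
      linear_combination s * h2 - χ (φ i)⁻¹ * hs
    · simp [evalWord, hχ]

theorem walkSum_character {n : ℕ} {G : Type*} [Group G] (φ : Fin n → G) (χ : G →* ℝ)
    {s : ℝ} (hs : s ^ 2 = 1) (hχ : ∀ i, χ (φ i) = s) (l : ℕ) :
    walkSum φ χ l = s ^ l * (reducedWords n l).card := by
  rw [walkSum, Finset.sum_congr rfl fun w hw => by
    rw [map_evalWord φ χ hs hχ, ((mem_reducedWords l w).1 hw).2]]
  simp [mul_comm]

theorem adjacency_character {n : ℕ} {G : Type*} [Group G] (φ : Fin n → G) (χ : G →* ℝ)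
    {s : ℝ} (hs : s ^ 2 = 1) (hχ : ∀ i, χ (φ i) = s) (g : G) :
    adjacency φ χ g = s * (2 * n) * χ g := by
  simp [adjacency, map_evalWord φ χ hs hχ]
  ring

theorem sum_mul_character_eq_zero {n : ℕ} {G : Type*} [Group G] [Fintype G] (φ : Fin n → G)
    (χ : G →* ℝ) {s : ℝ} (hs : s ^ 2 = 1) (hχ : ∀ i, χ (φ i) = s) {v : G → ℝ} {μ : ℝ}
    (hv : ∀ g, adjacency φ v g = μ * v g) (hμ : μ ≠ s * (2 * n)) : ∑ g, v g * χ g = 0 := by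
  have h := adjacency_symm φ v χ
  simp only [hv, adjacency_character φ χ hs hχ] at h
  have h1 : (μ - s * (2 * n)) * ∑ g, v g * χ g = 0 := by
    rw [sub_mul, Finset.mul_sum, Finset.mul_sum, sub_eq_zero]
    convert h using 2 <;> ring
  exact (mul_eq_zero.1 h1).resolve_left (sub_ne_zero.2 hμ)

theorem tendsto_walkSum_div_card_zero {n : ℕ} (hn : 2 ≤ n) {G : Type*} [Group G]
    (φ : Fin n → G) {v : G → ℝ} {μ : ℝ} (hv : ∀ g, adjacency φ v g = μ * v g)
    (hμ : |μ| < 2 * n) :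
    Tendsto (fun l => walkSum φ v l / (reducedWords n l).card) atTop (nhds 0) := by
  have hn' : (2 : ℝ) ≤ n := by exact_mod_cast hn
  have hq : (0 : ℝ) < 2 * n - 1 := by linarith
  have hrec : ∀ l, walkSum φ v (l + 1 + 2) =
      μ * walkSum φ v (l + 1 + 1) - (2 * n - 1) * walkSum φ v (l + 1) := by
    intro l
    have h := walkSum_adjacency φ v (l + 1)
    have h1 : walkSum φ (adjacency φ v) (l + 1 + 1) = μ * walkSum φ v (l + 1 + 1) := by
      simp only [walkSum, hv, Finset.mul_sum]
    rw [h1, branching, if_neg (Nat.succ_ne_zero l)] at h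
    linarith
  have hd : Tendsto (fun l => walkSum φ v (l + 1) / (2 * n - 1) ^ l) atTop (nhds 0) := by
    refine tendsto_zero_of_linear_recurrence (a := μ / (2 * n - 1)) (b := 1 / (2 * n - 1))
      ?_ ?_ fun l => ?_
    · rw [div_lt_one hq]; linarith
    · rw [abs_div, abs_of_pos hq, div_lt_iff₀ hq, add_mul, div_mul_cancel₀ _ hq.ne']
      linarith
    · have h := hrec l
      rw [show l + 2 + 1 = l + 1 + 2 by ring, h, pow_add, pow_succ]
      field_simp
      ring
  rw [← tendsto_add_atTop_iff_nat 1]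
  have h := hd.div_const (2 * n)
  rw [zero_div] at h
  refine h.congr fun l => ?_
  rw [card_reducedWords_succ, div_div, mul_comm (2 * (n : ℝ))]

/-- The sign character of a subgroup of index two. -/
noncomputable def signCharacter {G : Type*} [Group G] (H : Subgroup G) (hH : H.index = 2) :
    G →* ℝ := by
  classical
  exact
  { toFun := fun g => if g ∈ H then 1 else -1
    map_one' := by simp [H.one_mem]
    map_mul' := fun x y => by
      by_cases hx : x ∈ H <;> by_cases hy : y ∈ H <;>
        simp [Subgroup.mul_mem_iff_of_index_two hH, hx, hy] }

theorem signCharacter_of_mem {G : Type*} [Group G] {H : Subgroup G} (hH : H.index = 2) {g : G}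
    (hg : g ∈ H) : signCharacter H hH g = 1 := if_pos hg

theorem signCharacter_of_notMem {G : Type*} [Group G] {H : Subgroup G} (hH : H.index = 2)
    {g : G} (hg : g ∉ H) : signCharacter H hH g = -1 := if_neg hg

/-- The deviation of the average of `v` along reduced words of length `l` from the
limiting value predicted by the trivial character and `χ`. -/
noncomputable def walkDeviation {n : ℕ} {G : Type*} [Group G] [Fintype G] (φ : Fin n → G)
    (χ : G →* ℝ) (l : ℕ) (v : G → ℝ) : ℝ :=
  walkSum φ v l / (reducedWords n l).card -
    (∑ g, v g + (-1) ^ l * ∑ g, v g * χ g) / Fintype.card G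

theorem walkDeviation_add {n : ℕ} {G : Type*} [Group G] [Fintype G] (φ : Fin n → G)
    (χ : G →* ℝ) (l : ℕ) (v w : G → ℝ) : walkDeviation φ χ l (v + w) =
      walkDeviation φ χ l v + walkDeviation φ χ l w := by
  simp only [walkDeviation, walkSum, Pi.add_apply, add_mul, Finset.sum_add_distrib]
  ring

theorem walkDeviation_smul {n : ℕ} {G : Type*} [Group G] [Fintype G] (φ : Fin n → G)
    (χ : G →* ℝ) (l : ℕ) (c : ℝ) (v : G → ℝ) : walkDeviation φ χ l (c • v) =
      c * walkDeviation φ χ l v := by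
  simp only [walkDeviation, walkSum, Pi.smul_apply, smul_eq_mul, mul_assoc, ← Finset.mul_sum]
  ring

theorem card_reducedWords_ne_zero {n : ℕ} (hn : 2 ≤ n) (l : ℕ) :
    ((reducedWords n l).card : ℝ) ≠ 0 := by
  have hn' : (2 : ℝ) ≤ n := by exact_mod_cast hn
  cases l with
  | zero => simp [reducedWords]
  | succ l =>
    rw [card_reducedWords_succ]
    have : (0 : ℝ) < 2 * n - 1 := by linarith
    positivity

theorem tendsto_walkDeviation_of_eigenvector {n : ℕ} (hn : 2 ≤ n) {G : Type*} [Group G]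
    [Fintype G] (φ : Fin n → G) (hgen : Subgroup.closure (Set.range φ) = ⊤) (χ : G →* ℝ)
    (hχ : ∀ i, χ (φ i) = -1) {v : G → ℝ} {μ : ℝ} (hv : ∀ g, adjacency φ v g = μ * v g) :
    Tendsto (fun l => walkDeviation φ χ l v) atTop (nhds 0) := by
  have hn' : (2 : ℝ) ≤ n := by exact_mod_cast hn
  have hs1 : (1 : ℝ) ^ 2 = 1 := by norm_num
  have hs2 : (-1 : ℝ) ^ 2 = 1 := by norm_num
  have h1 : ∀ i, (1 : G →* ℝ) (φ i) = 1 := fun i => rfl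
  have hcard : (Fintype.card G : ℝ) ≠ 0 := by exact_mod_cast Fintype.card_ne_zero
  have hsq : ∀ g, χ g * χ g = 1 := by
    have : χ * χ = 1 := MonoidHom.eq_of_eqOn_dense hgen (by rintro _ ⟨i, rfl⟩; simp [hχ])
    exact fun g => DFunLike.congr_fun this g
  have hsum : ∑ g, χ g = 0 := by
    simpa using sum_mul_character_eq_zero φ χ hs2 hχ (v := (1 : G →* ℝ)) (μ := 1 * (2 * n))
      (adjacency_character φ 1 hs1 h1) (by linarith)
  by_cases hv0 : v = 0
  · simp [hv0, walkDeviation, walkSum]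
  have hle := mul_eigenvalue_le φ hv0 hs1 hv
  have hge := mul_eigenvalue_le φ hv0 hs2 hv
  by_cases hμ1 : μ = 1 * (2 * n)
  · subst hμ1
    have hvc : v = v 1 • ⇑(1 : G →* ℝ) := by
      funext g
      simpa using eq_mul_of_extremal_eigenvalue φ hgen 1 hs1 h1 hv g
    refine tendsto_const_nhds.congr fun l => ?_
    rw [hvc, walkDeviation_smul, walkDeviation, walkSum_character φ 1 hs1 h1]
    have := card_reducedWords_ne_zero hn l
    simp [hsum, this, hcard]
  by_cases hμ2 : μ = -1 * (2 * n)
  · subst hμ2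
    have hvc : v = v 1 • ⇑χ := by
      funext g
      simpa [mul_comm] using eq_mul_of_extremal_eigenvalue φ hgen χ hs2 hχ hv g
    refine tendsto_const_nhds.congr fun l => ?_
    rw [hvc, walkDeviation_smul, walkDeviation, walkSum_character φ χ hs2 hχ]
    have := card_reducedWords_ne_zero hn l
    simp [hsum, this, hcard, hsq]
  have hlt : |μ| < 2 * n := by
    rw [abs_lt]
    constructor
    · refine lt_of_le_of_ne (by linarith) fun h => hμ2 (by linarith)
    · exact lt_of_le_of_ne (by linarith) fun h => hμ1 (by linarith)
  have e1 : ∑ g, v g = 0 := by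
    simpa using sum_mul_character_eq_zero φ 1 hs1 h1 hv hμ1
  have e2 := sum_mul_character_eq_zero φ χ hs2 hχ hv hμ2
  simpa [walkDeviation, e1, e2] using tendsto_walkSum_div_card_zero hn φ hv hlt

theorem tendsto_walkDeviation {n : ℕ} (hn : 2 ≤ n) {G : Type*} [Group G]
    [Fintype G] (φ : Fin n → G) (hgen : Subgroup.closure (Set.range φ) = ⊤) (χ : G →* ℝ)
    (hχ : ∀ i, χ (φ i) = -1) (v : G → ℝ) :
    Tendsto (fun l => walkDeviation φ χ l v) atTop (nhds 0) := by
  let T : EuclideanSpace ℝ G →ₗ[ℝ] EuclideanSpace ℝ G :=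
    { toFun := fun v => WithLp.toLp 2 (adjacency φ v)
      map_add' := fun v w => by
        ext g
        simp [adjacency, Finset.sum_add_distrib]
      map_smul' := fun c v => by
        ext g
        simp [adjacency, Finset.mul_sum] }
  have hT : T.IsSymmetric := by
    intro v w
    have h := adjacency_symm φ v w
    simpa [T, PiLp.inner_apply, mul_comm] using h
  let P : Submodule ℝ (EuclideanSpace ℝ G) :=
    { carrier := {v | Tendsto (fun l => walkDeviation φ χ l v) atTop (nhds 0)}
      zero_mem' := by simp [walkDeviation, walkSum]
      add_mem' := fun {v w} hv hw => by
        have h := Tendsto.add hv hw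
        rw [add_zero] at h
        exact h.congr fun l => (walkDeviation_add φ χ l v w).symm
      smul_mem' := fun c v hv => by
        have h := Tendsto.const_mul c hv
        rw [mul_zero] at h
        exact h.congr fun l => (walkDeviation_smul φ χ l c v).symm }
  have htop := Submodule.orthogonal_eq_bot_iff.1 hT.orthogonalComplement_iSup_eigenspaces_eq_bot
  have hP : ⨆ μ, Module.End.eigenspace T μ ≤ P := by
    refine iSup_le fun μ v hv => ?_
    rw [Module.End.mem_eigenspace_iff] at hv
    exact tendsto_walkDeviation_of_eigenvector hn φ hgen χ hχ (μ := μ) fun g =>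
      congrArg (fun u : EuclideanSpace ℝ G => u g) hv
  rw [htop] at hP
  exact hP (Submodule.mem_top (x := WithLp.toLp 2 v))

theorem tendsto_proportion_sub {n : ℕ} (hn : 2 ≤ n) {G : Type*} [Group G] [Finite G]
    (φ : Fin n → G) (hgen : Subgroup.closure (Set.range φ) = ⊤) (χ : G →* ℝ)
    (hχ : ∀ i, χ (φ i) = -1) (g : G) :
    Tendsto (fun l =>
      (Nat.card {w : List (Fin n × Bool) //
          FreeGroup.reduce w = w ∧ w.length = l ∧ evalWord φ w = g} : ℝ) /
        (Nat.card {w : List (Fin n × Bool) // FreeGroup.reduce w = w ∧ w.length = l} : ℝ) -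
      (1 + (-1) ^ l * χ g) / (Nat.card G : ℝ)) atTop (nhds 0) := by
  classical
  have := Fintype.ofFinite G
  refine (tendsto_walkDeviation hn φ hgen χ hχ (Pi.single g 1)).congr fun l => ?_
  have h1 : Nat.card {w : List (Fin n × Bool) // FreeGroup.reduce w = w ∧ w.length = l} =
      (reducedWords n l).card :=
    Nat.subtype_card _ fun w => mem_reducedWords l w
  have h2 : Nat.card {w : List (Fin n × Bool) //
      FreeGroup.reduce w = w ∧ w.length = l ∧ evalWord φ w = g} =
      ((reducedWords n l).filter fun w => evalWord φ w = g).card :=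
    Nat.subtype_card _ fun w => by rw [Finset.mem_filter, mem_reducedWords, and_assoc]
  rw [h1, h2, walkDeviation, walkSum, Nat.card_eq_fintype_card]
  simp [Pi.single_apply]

/-- Let `G` be a finite group, `φ : X → G` a function whose image generates `G`, and `H ≤ G` a
subgroup of index 2 with `φ x_i ∉ H` for all `i`.  Then every reduced word of even length
evaluates in `G` to an element of `H`, every reduced word of odd length evaluates to an element
of `G ∖ H`, and moreover for `g ∈ H` the proportion of reduced words of length `2l` evaluating
to `g` converges to `2/|G|`, while for `g ∈ G ∖ H` the proportion of reduced words of length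
`2l+1` evaluating to `g` converges to `2/|G|`, as `l → ∞`. -/
theorem nonbacktracking_walk_equidistribution_periodic
    (n : ℕ) (hn : 2 ≤ n) (G : Type*) [Group G] [Finite G]
    (φ : Fin n → G) (hgen : Subgroup.closure (Set.range φ) = ⊤)
    (H : Subgroup G) (hH : H.index = 2) (hxH : ∀ i, φ i ∉ H) :
    (∀ w : List (Fin n × Bool), FreeGroup.reduce w = w → Even w.length → evalWord φ w ∈ H) ∧
    (∀ w : List (Fin n × Bool), FreeGroup.reduce w = w → Odd w.length → evalWord φ w ∉ H) ∧
    (∀ g ∈ H,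
      Tendsto (fun l =>
          (Nat.card {w : List (Fin n × Bool) //
              FreeGroup.reduce w = w ∧ w.length = 2 * l ∧ evalWord φ w = g} : ℝ) /
            (Nat.card {w : List (Fin n × Bool) //
              FreeGroup.reduce w = w ∧ w.length = 2 * l} : ℝ))
        atTop (nhds (2 / (Nat.card G : ℝ)))) ∧
    (∀ g ∉ H,
      Tendsto (fun l =>
          (Nat.card {w : List (Fin n × Bool) //
              FreeGroup.reduce w = w ∧ w.length = 2 * l + 1 ∧ evalWord φ w = g} : ℝ) /
            (Nat.card {w : List (Fin n × Bool) //
              FreeGroup.reduce w = w ∧ w.length = 2 * l + 1} : ℝ))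
        atTop (nhds (2 / (Nat.card G : ℝ)))) := by
  have hs : (-1 : ℝ) ^ 2 = 1 := by norm_num
  have hχ : ∀ i, signCharacter H hH (φ i) = -1 := fun i => signCharacter_of_notMem hH (hxH i)
  have hlen := map_evalWord φ (signCharacter H hH) hs hχ
  refine ⟨fun w _ hw => ?_, fun w _ hw hmem => ?_, fun g hg => ?_, fun g hg => ?_⟩
  · by_contra hmem
    have h := hlen w
    rw [signCharacter_of_notMem hH hmem, hw.neg_one_pow] at h
    norm_num at h
  · have h := hlen w
    rw [signCharacter_of_mem hH hmem, hw.neg_one_pow] at h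
    norm_num at h
  · have h := (tendsto_proportion_sub hn φ hgen _ hχ g).comp
      (tendsto_id.const_mul_atTop' (r := 2) two_pos)
    rw [← tendsto_sub_nhds_zero_iff]
    refine h.congr fun l => ?_
    simp [signCharacter_of_mem hH hg, one_add_one_eq_two]
  · have h := (tendsto_proportion_sub hn φ hgen _ hχ g).comp
      ((tendsto_add_atTop_nat 1).comp (tendsto_id.const_mul_atTop' (r := 2) two_pos))
    rw [← tendsto_sub_nhds_zero_iff]
    refine h.congr fun l => ?_
    simp [signCharacter_of_notMem hH hg, (odd_two_mul_add_one l).neg_one_pow, one_add_one_eq_two]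
end

section
/- Let G be a group and X → G a function. The following are equivalent: (i) the induced homomorphism F → G is surjective but not injective (i.e. G is generated by the x_i but is not a free group freely generated by them); (ii) for every g ∈ G, all i, j ∈ {1,…,n} and all signs ε, ε' ∈ {±1}, there exists a nontrivial reduced word w in the alphabet X ∪ X⁻¹ whose first letter is different from x_j^{−ε'}, whose last letter is x_i^{ε}, and which satisfies w =_G g. -/
/-- `HasReducedWord φ g a b` says that `g` is the value of a reduced word with first letter `a`
and last letter `b`. -/
def HasReducedWord {n : ℕ} {G : Type*} [Group G] (φ : Fin n → G) (g : G) (a b : Fin n × Bool) :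
    Prop :=
  ∃ w : List (Fin n × Bool), FreeGroup.IsReduced w ∧ w.head? = some a ∧ w.getLast? = some b ∧
    evalWord φ w = g

theorem evalWord_append {n : ℕ} {G : Type*} [Group G] (φ : Fin n → G)
    (v w : List (Fin n × Bool)) : evalWord φ (v ++ w) = evalWord φ v * evalWord φ w := by
  simp only [evalWord, ← FreeGroup.mul_mk, map_mul]

namespace HasReducedWord

variable {n : ℕ} {G : Type*} [Group G] {φ : Fin n → G}

theorem of_isReduced {w : List (Fin n × Bool)} (hw : FreeGroup.IsReduced w) (hne : w ≠ []) :
    ∃ a b, HasReducedWord φ (evalWord φ w) a b :=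
  ⟨w.head hne, w.getLast hne, w, hw, List.head?_eq_some_head hne,
    List.getLast?_eq_some_getLast hne, rfl⟩

theorem singleton (a : Fin n × Bool) : HasReducedWord φ (evalWord φ [a]) a a :=
  ⟨[a], FreeGroup.IsReduced.singleton, rfl, rfl, rfl⟩

theorem mul {g h : G} {a b c d : Fin n × Bool} (hg : HasReducedWord φ g a b)
    (hh : HasReducedWord φ h c d) (hbc : b.1 = c.1 → b.2 = c.2) :
    HasReducedWord φ (g * h) a d := by
  obtain ⟨v, hv, hva, hvb, rfl⟩ := hg
  obtain ⟨w, hw, hwc, hwd, rfl⟩ := hh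
  refine ⟨v ++ w, ?_, by simp [hva], by simp [hwd], evalWord_append φ v w⟩
  refine List.isChain_append.2 ⟨hv, hw, ?_⟩
  simpa [hvb, hwc] using hbc

theorem conj {p q : Fin n × Bool} (h : HasReducedWord φ 1 p q) (c : Fin n × Bool)
    (hp : c.1 = p.1 → c.2 = p.2) (hq : q.1 = c.1 → q.2 = !c.2) :
    HasReducedWord φ 1 c (c.1, !c.2) := by
  have := ((singleton c).mul h hp).mul (singleton (φ := φ) (c.1, !c.2)) hq
  have hc : evalWord φ [c] * 1 * evalWord φ [(c.1, !c.2)] = 1 := by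
    obtain ⟨i, b⟩ := c
    cases b <;> simp [evalWord]
  rwa [hc] at this

/-- If some nonempty reduced word is trivial in `G`, then there are such words with arbitrary
first and last letters. -/
theorem one_of_one (hn : 2 ≤ n) {p q : Fin n × Bool} (h : HasReducedWord φ 1 p q)
    (a b : Fin n × Bool) : HasReducedWord φ 1 a b := by
  have : Nontrivial (Fin n) := Fin.nontrivial_iff_two_le.2 hn
  have conj_all (d : Fin n × Bool) : HasReducedWord φ 1 d (d.1, !d.2) := by
    obtain ⟨c, hc⟩ : ∃ c, HasReducedWord φ 1 c (c.1, !c.2) := by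
      by_cases hpq : p.1 = q.1
      · obtain ⟨k, hk⟩ := exists_ne p.1
        exact ⟨(k, true), h.conj _ (fun e => absurd e hk) fun e => absurd (hpq.trans e).symm hk⟩
      · exact ⟨p, h.conj p (fun _ => rfl) fun e => absurd e.symm hpq⟩
    by_cases hd : d.1 = c.1
    · obtain ⟨k, hk⟩ := exists_ne c.1
      have hkd : k ≠ d.1 := hd ▸ hk
      exact (hc.conj (k, true) (fun e => absurd e hk) fun e => absurd e.symm hk).conj d
        (fun e => absurd e.symm hkd) fun e => absurd e hkd
    · exact hc.conj d (fun e => absurd e hd) fun e => absurd e.symm hd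
  by_cases hab : a.1 = b.1 → a.2 = b.2
  · have := (conj_all a).mul (conj_all (b.1, !b.2)) fun e => congrArg not (hab e)
    simpa using this
  · have hb : b = (a.1, !a.2) := by
      obtain ⟨h₁, h₂⟩ := Classical.not_imp.1 hab
      exact Prod.ext h₁.symm (Bool.eq_not_of_ne (Ne.symm h₂))
    exact hb ▸ conj_all a

end HasReducedWord

/-- Let `G` be a group and `φ : X → G` a function.  The induced homomorphism `F(X) → G` is
surjective but not injective (i.e. `G` is generated, but not freely generated, by the images of
the `x_i`) if and only if for every `g ∈ G`, all `i, j` and all signs `ε, ε'` there is a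
nontrivial reduced word whose first letter differs from `x_j^{-ε'}`, whose last letter is
`x_i^{ε}`, and which evaluates to `g` in `G`. -/
theorem irreducibility_iff_generated_not_freely
    (n : ℕ) (hn : 2 ≤ n) (G : Type*) [Group G] (φ : Fin n → G) :
    (Function.Surjective (FreeGroup.lift φ) ∧ ¬ Function.Injective (FreeGroup.lift φ)) ↔
    (∀ (g : G) (i j : Fin n) (ε ε' : Bool),
      ∃ w : List (Fin n × Bool), FreeGroup.reduce w = w ∧ w ≠ [] ∧
        w.head? ≠ some (j, !ε') ∧ w.getLast? = some (i, ε) ∧ evalWord φ w = g) := by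
  constructor
  · rintro ⟨hsurj, hinj⟩ g i j ε ε'
    obtain ⟨r, hr, hr1⟩ : ∃ r, FreeGroup.lift φ r = 1 ∧ r ≠ 1 := by
      simpa [injective_iff_map_eq_one] using hinj
    obtain ⟨p, q, hpq⟩ := HasReducedWord.of_isReduced (φ := φ) (FreeGroup.isReduced_toWord (x := r))
      (mt FreeGroup.toWord_eq_nil_iff.1 hr1)
    rw [evalWord, FreeGroup.mk_toWord, hr] at hpq
    have key : HasReducedWord φ g (j, ε') (i, ε) := by
      obtain ⟨f, rfl⟩ := hsurj g
      by_cases hf : f = 1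
      · simpa [hf] using hpq.one_of_one hn (j, ε') (i, ε)
      · obtain ⟨s, t, hst⟩ := HasReducedWord.of_isReduced (φ := φ)
          (FreeGroup.isReduced_toWord (x := f)) (mt FreeGroup.toWord_eq_nil_iff.1 hf)
        rw [evalWord, FreeGroup.mk_toWord] at hst
        simpa using ((hpq.one_of_one hn (j, ε') s).mul hst fun _ => rfl).mul
          (hpq.one_of_one hn t (i, ε)) fun _ => rfl
    obtain ⟨w, hw, hhead, hlast, hval⟩ := key
    refine ⟨w, hw.reduce_eq, ?_, ?_, hlast, hval⟩
    · rintro rfl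
      simp at hhead
    · simp [hhead]
  · intro h
    let k : Fin n := ⟨0, by lia⟩
    refine ⟨fun g => ?_, fun hinj => ?_⟩
    · obtain ⟨w, -, -, -, -, hw⟩ := h g k k true true
      exact ⟨_, hw⟩
    · obtain ⟨w, hred, hne, -, -, hw⟩ := h 1 k k true true
      have hmk : FreeGroup.mk w = 1 := hinj (hw.trans (map_one _).symm)
      apply hne
      rw [← hred, ← FreeGroup.toWord_mk, hmk, FreeGroup.toWord_one]
end
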